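/- (Spurnullstellensatz) Let F be an algebraically closed field of characteristic 0 and let f₁, …, f_r, f ∈ F⟨X⟩. The following are equivalent: (a) for every n ∈ ℕ and every A ∈ Mₙ(F)^g, if tr(f₁(A)) = … = tr(f_r(A)) = 0 then tr(f(A)) = 0; (b) either there exist λ₁, …, λ_r ∈ F such that f is cyclically equivalent to λ₁f₁ + ⋯ + λ_rf_r, or there exist λ₁, …, λ_r ∈ F such that λ₁f₁ + ⋯ + λ_rf_r is cyclically equivalent to 1. -/

import Mathlib

/-- Two free noncommutative polynomials are cyclically equivalent if their difference
lies in the `F`-linear span of commutators `p * q - q * p`. -/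
def CycEq {F : Type*} [Field F] {g : ℕ} (f h : FreeAlgebra F (Fin g)) : Prop :=
  f - h ∈ Submodule.span F
    {x : FreeAlgebra F (Fin g) | ∃ p q : FreeAlgebra F (Fin g), x = p * q - q * p}

/-!
If neither alternative of (b) holds, then neither `f₀` nor `1` lies in the span of the `f i` and the
commutators, so some tracial functional `τ` vanishes on every `f i` but neither at `f₀` nor at `1`.
It remains to see that `τ` is, up to a nonzero scalar, a matrix trace on polynomials of degree at
most `d`. Matrices are found degree by degree. Writing the letters of a word of length `d` around a
directed cycle with `d` edges, exactly one of which has a weight `t ≠ 1`, gives matrices for which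
all nonempty words shorter than `d` have trace `0`, while the words of length `d` with nonzero trace
are the rotations of the given one and their trace is linear in `t`. A direct sum of such
cycles therefore corrects the traces of the words of length `d` without disturbing the shorter ones,
and no roots have to be extracted. The total size depends only on `d`, and the value of `τ` at `1`
is adjusted to it by rescaling `τ`.
-/

section Tracial

/-- A linear map on an algebra is tracial if it takes the same value on `a * b` and `b * a`; such
maps are the abstract counterpart of `p ↦ tr (p A)`. -/
def IsTracial {R A M : Type*} [Semiring R] [Semiring A] [Module R A] [AddCommMonoid M]
    [Module R M] (τ : A →ₗ[R] M) : Prop :=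
  ∀ a b, τ (a * b) = τ (b * a)

theorem IsTracial.sub {R A M : Type*} [Semiring R] [Semiring A] [Module R A] [AddCommGroup M]
    [Module R M] {τ τ' : A →ₗ[R] M} (hτ : IsTracial τ) (hτ' : IsTracial τ') :
    IsTracial (τ - τ') :=
  fun a b => by simp only [LinearMap.sub_apply, hτ a b, hτ' a b]

theorem IsTracial.smul {R A M : Type*} [CommSemiring R] [Semiring A] [Module R A]
    [AddCommMonoid M] [Module R M] {τ : A →ₗ[R] M} (hτ : IsTracial τ) (c : R) :
    IsTracial (c • τ) :=
  fun a b => by simp only [LinearMap.smul_apply, hτ a b]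

/-- The span of all commutators of an algebra: the common kernel of its tracial maps, and the
submodule modulo which `CycEq` is equality. -/
def commutatorSpan (R A : Type*) [Semiring R] [Ring A] [Module R A] : Submodule R A :=
  Submodule.span R {x | ∃ a b : A, x = a * b - b * a}

theorem isTracial_iff_commutatorSpan_le_ker {R A M : Type*} [Semiring R] [Ring A] [Module R A]
    [AddCommGroup M] [Module R M] {τ : A →ₗ[R] M} :
    IsTracial τ ↔ commutatorSpan R A ≤ LinearMap.ker τ := by
  rw [commutatorSpan, Submodule.span_le]
  constructor
  · rintro hτ _ ⟨a, b, rfl⟩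
    simp [hτ a b]
  · intro hτ a b
    simpa [sub_eq_zero] using hτ ⟨a, b, rfl⟩

theorem exists_dual_le_ker_forall_apply_ne_zero {K V ι : Type*} [Field K] [Infinite K]
    [AddCommGroup V] [Module K V] [Finite ι] (W : Submodule K V) {v : ι → V}
    (hv : ∀ i, v i ∉ W) :
    ∃ φ : V →ₗ[K] K, W ≤ LinearMap.ker φ ∧ ∀ i, φ (v i) ≠ 0 := by
  obtain ⟨φ, hφ⟩ := Module.exists_dual_forall_apply_ne_zero (K := K) (fun i => W.mkQ (v i))
    (by simpa using hv)
  exact ⟨φ ∘ₗ W.mkQ, fun x hx => by simp [(Submodule.Quotient.mk_eq_zero W).2 hx], hφ⟩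

end Tracial

section FreeWord

variable (R : Type*) [CommSemiring R] {X : Type*}

/-- The noncommutative monomial spelled by a list of letters. -/
def freeWord (l : List X) : FreeAlgebra R X :=
  (l.map (FreeAlgebra.ι R)).prod

@[simp]
theorem freeWord_nil : freeWord R ([] : List X) = 1 := rfl

theorem freeWord_append (l l' : List X) :
    freeWord R (l ++ l') = freeWord R l * freeWord R l' := by
  simp [freeWord]

theorem lift_freeWord {R : Type*} [CommSemiring R] {A : Type*} [Semiring A] [Algebra R A]
    (a : X → A) (l : List X) : FreeAlgebra.lift R a (freeWord R l) = (l.map a).prod := by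
  simp [freeWord, map_list_prod, Function.comp_def]

theorem IsTracial.apply_freeWord_rotate {R : Type*} [CommSemiring R] {M : Type*}
    [AddCommMonoid M] [Module R M] {τ : FreeAlgebra R X →ₗ[R] M} (hτ : IsTracial τ)
    (l : List X) (k : ℕ) : τ (freeWord R (l.rotate k)) = τ (freeWord R l) := by
  rw [List.rotate_eq_drop_append_take_mod, freeWord_append, hτ, ← freeWord_append,
    List.take_append_drop]

variable (X) in
/-- The noncommutative polynomials of degree at most `d`, as the span of the words of length at
most `d`. -/
def wordSpan (d : ℕ) : Submodule R (FreeAlgebra R X) :=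
  Submodule.span R (freeWord R '' {l | l.length ≤ d})

theorem span_range_freeWord : Submodule.span R (Set.range (freeWord R (X := X))) = ⊤ := by
  rw [← Algebra.top_toSubmodule, ← FreeAlgebra.adjoin_range_ι, Algebra.adjoin_eq_span,
    Submonoid.closure_eq_image_prod, ← Set.range_list_map, ← Set.range_comp]
  rfl

open Filter in
theorem eventually_mem_wordSpan (p : FreeAlgebra R X) : ∀ᶠ d in atTop, p ∈ wordSpan R X d := by
  have hp : p ∈ Submodule.span R (Set.range (freeWord R)) :=
    span_range_freeWord R ▸ Submodule.mem_top
  induction hp using Submodule.span_induction with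
  | mem _ hx =>
    obtain ⟨l, rfl⟩ := hx
    filter_upwards [eventually_ge_atTop l.length] with d hd
    exact Submodule.subset_span ⟨l, hd, rfl⟩
  | zero => exact .of_forall fun d => zero_mem _
  | add p q _ _ hp hq => filter_upwards [hp, hq] with d using add_mem
  | smul c p _ hp => filter_upwards [hp] with d using Submodule.smul_mem _ c

end FreeWord

section MatrixTrace

variable {R : Type*} [CommSemiring R] {X m n : Type*} [Fintype m] [DecidableEq m]
  [Fintype n] [DecidableEq n]

/-- The linear functional `p ↦ tr (p A)` on noncommutative polynomials attached to a tuple `A` of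
square matrices. -/
def matrixTrace (A : X → Matrix m m R) : FreeAlgebra R X →ₗ[R] R :=
  Matrix.traceLinearMap m R R ∘ₗ (FreeAlgebra.lift R A).toLinearMap

theorem matrixTrace_apply (A : X → Matrix m m R) (p : FreeAlgebra R X) :
    matrixTrace A p = (FreeAlgebra.lift R A p).trace := rfl

@[simp]
theorem matrixTrace_one (A : X → Matrix m m R) : matrixTrace A 1 = Fintype.card m := by
  simp [matrixTrace_apply]

theorem isTracial_matrixTrace (A : X → Matrix m m R) : IsTracial (matrixTrace A) := fun p q => by
  simp only [matrixTrace_apply, map_mul, Matrix.trace_mul_comm (FreeAlgebra.lift R A p)]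

theorem matrixTrace_reindex (A : X → Matrix m m R) (e : m ≃ n) :
    matrixTrace (fun x => Matrix.reindex e e (A x)) = matrixTrace A := by
  have hlift : FreeAlgebra.lift R (fun x => Matrix.reindex e e (A x)) =
      (Matrix.reindexAlgEquiv R R e).toAlgHom.comp (FreeAlgebra.lift R A) := by
    ext; simp
  ext p
  rw [matrixTrace_apply, hlift]
  simpa [matrixTrace_apply, Matrix.trace] using
    e.symm.sum_comp fun i => FreeAlgebra.lift R A p i i

theorem lift_fromBlocks_zero (A : X → Matrix m m R) (B : X → Matrix n n R)
    (p : FreeAlgebra R X) :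
    FreeAlgebra.lift R (fun x => Matrix.fromBlocks (A x) 0 0 (B x)) p =
      Matrix.fromBlocks (FreeAlgebra.lift R A p) 0 0 (FreeAlgebra.lift R B p) := by
  induction p using FreeAlgebra.induction with
  | grade0 r =>
    simp [Algebra.algebraMap_eq_smul_one, ← Matrix.fromBlocks_one, Matrix.fromBlocks_smul]
  | grade1 x => simp
  | mul p q hp hq => simp [hp, hq, Matrix.fromBlocks_multiply]
  | add p q hp hq => simp [hp, hq, Matrix.fromBlocks_add]

theorem matrixTrace_fromBlocks_zero (A : X → Matrix m m R) (B : X → Matrix n n R) :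
    matrixTrace (fun x => Matrix.fromBlocks (A x) 0 0 (B x)) =
      matrixTrace A + matrixTrace B := by
  ext p
  simp [matrixTrace_apply, lift_fromBlocks_zero, Matrix.trace]

end MatrixTrace

section WeightedShift

variable {R : Type*} [CommSemiring R] {X m : Type*} [DecidableEq m]

/-- The matrix with an entry `a i` in position `(i, σ i)` for each `i` and zeros elsewhere: the
weighted adjacency matrix of the functional graph of `σ`. -/
def weightedShift (σ : m → m) (a : m → R) : Matrix m m R :=
  Matrix.of fun i j => if σ i = j then a i else 0

theorem weightedShift_apply (σ : m → m) (a : m → R) (i j : m) :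
    weightedShift σ a i j = if σ i = j then a i else 0 := rfl

variable [Fintype m]

theorem prod_map_weightedShift_apply (σ : m → m) (a : X → m → R) (l : List X) (i j : m) :
    (l.map fun x => weightedShift σ (a x)).prod i j =
      if σ^[l.length] i = j then ∏ k : Fin l.length, a l[k] (σ^[k] i) else 0 := by
  induction l generalizing i with
  | nil => simp [Matrix.one_apply]
  | cons x l ih =>
    rw [List.map_cons, List.prod_cons, Matrix.mul_apply]
    simp only [weightedShift_apply, ite_mul, zero_mul, Finset.sum_ite_eq, Finset.mem_univ,
      if_true, ih]
    simp [Fin.prod_univ_succ]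

theorem matrixTrace_weightedShift_freeWord (σ : m → m) (a : X → m → R) (l : List X) :
    matrixTrace (fun x => weightedShift σ (a x)) (freeWord R l) =
      ∑ i, if σ^[l.length] i = i then ∏ k : Fin l.length, a l[k] (σ^[k] i) else 0 := by
  simp [matrixTrace_apply, lift_freeWord, Matrix.trace, prod_map_weightedShift_apply]

end WeightedShift

section CyclicWord

variable {n : ℕ} [NeZero n] {X : Type*}

/-- The enumeration `i, i + 1, …, i + (n - 1)` of `ZMod n` starting at `i`. -/
def cyclicEnum (i : ZMod n) : Fin n ≃ ZMod n where
  toFun k := i + (k : ℕ)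
  invFun j := ⟨(j - i).val, ZMod.val_lt _⟩
  left_inv k := by simp [ZMod.val_cast_of_lt k.isLt]
  right_inv j := by simp

theorem cyclicEnum_apply (i : ZMod n) (k : Fin n) : cyclicEnum i k = i + (k : ℕ) := rfl

/-- The word of length `n` read off a cyclic arrangement `w` of `n` letters by going around once
from position `i`. -/
def cyclicWord (w : ZMod n → X) (i : ZMod n) : List X :=
  List.ofFn (w ∘ cyclicEnum i)

theorem cyclicWord_eq_rotate (w : ZMod n → X) (i : ZMod n) :
    cyclicWord w i = (cyclicWord w 0).rotate i.val := by
  refine List.ext_getElem (by simp [cyclicWord]) fun k _ _ => ?_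
  simp [cyclicWord, cyclicEnum_apply, List.getElem_rotate, add_comm]

theorem cyclicWord_eq_iff {w : ZMod n → X} {i : ZMod n} {l : List X} (hl : l.length = n) :
    cyclicWord w i = l ↔ w ∘ cyclicEnum i = l.get ∘ Fin.cast hl.symm := by
  subst hl
  change _ ↔ w ∘ cyclicEnum i = l.get
  rw [← List.ofFn_inj, List.ofFn_get, cyclicWord]

end CyclicWord

section CycleMatrix

variable {R : Type*} [CommSemiring R] {n : ℕ} [NeZero n] {X : Type*} [DecidableEq X] [Fintype X]

/-- The direct sum, over all cyclic arrangements `w` of `n` letters, of the adjacency matrices of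
the `n`-cycle whose edge from `i` to `i + 1` is labelled by the letter `w i`; `cycleMatrix t x`
retains the edges labelled `x`. The edge leaving `0` has weight `t w`, the other edges have
weight `1`. -/
def cycleMatrix (t : (ZMod n → X) → R) (x : X) :
    Matrix ((ZMod n → X) × ZMod n) ((ZMod n → X) × ZMod n) R :=
  weightedShift (Prod.map id (· + 1)) fun p =>
    if p.1 p.2 = x then (Pi.mulSingle 0 (t p.1) : ZMod n → R) p.2 else 0

theorem matrixTrace_cycleMatrix_freeWord (t : (ZMod n → X) → R) (l : List X) :
    matrixTrace (cycleMatrix t) (freeWord R l) =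
      ∑ p : (ZMod n → X) × ZMod n,
        if (l.length : ZMod n) = 0 ∧ ∀ k : Fin l.length, p.1 (p.2 + (k : ℕ)) = l[k] then
          ∏ k : Fin l.length, (Pi.mulSingle 0 (t p.1) : ZMod n → R) (p.2 + (k : ℕ))
        else 0 := by
  unfold cycleMatrix
  simp only [matrixTrace_weightedShift_freeWord, Prod.map_iterate, Function.iterate_id,
    add_right_iterate, Prod.map_fst, Prod.map_snd, id, Finset.prod_ite_zero, nsmul_one,
    Prod.ext_iff, true_and, add_eq_left, ite_and, Finset.mem_univ, true_imp_iff]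

theorem matrixTrace_cycleMatrix_freeWord_of_length_lt (t : (ZMod n → X) → R) {l : List X}
    (hl : l ≠ []) (hln : l.length < n) : matrixTrace (cycleMatrix t) (freeWord R l) = 0 := by
  have hcast : (l.length : ZMod n) ≠ 0 := by
    rw [Ne, ZMod.natCast_eq_zero_iff]
    exact Nat.not_dvd_of_pos_of_lt (List.length_pos_iff.2 hl) hln
  simp [matrixTrace_cycleMatrix_freeWord, hcast]

theorem matrixTrace_cycleMatrix_freeWord_of_length_eq (t : (ZMod n → X) → R) {l : List X}
    (hl : l.length = n) :
    matrixTrace (cycleMatrix t) (freeWord R l) =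
      ∑ p : (ZMod n → X) × ZMod n, if cyclicWord p.1 p.2 = l then t p.1 else 0 := by
  rw [matrixTrace_cycleMatrix_freeWord]
  subst hl
  have hprod (i : ZMod l.length) (c : R) :
      ∏ k : Fin l.length, (Pi.mulSingle 0 c : ZMod l.length → R) (i + (k : ℕ)) = c :=
    ((cyclicEnum i).prod_comp _).trans (Fintype.prod_pi_mulSingle' 0 c)
  have hword (w : ZMod l.length → X) (i : ZMod l.length) :
      cyclicWord w i = l ↔ ∀ k : Fin l.length, w (i + (k : ℕ)) = l[k] :=
    (cyclicWord_eq_iff rfl).trans funext_iff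
  simp only [hprod, hword, CharP.cast_eq_zero, true_and]

end CycleMatrix

section Realization

theorem IsTracial.exists_matrixTrace_cycleMatrix_eq {R X : Type*} [CommRing R] [Module ℚ R]
    [DecidableEq X] [Fintype X] {τ : FreeAlgebra R X →ₗ[R] R} (hτ : IsTracial τ) (n : ℕ)
    [NeZero n] :
    ∃ t : (ZMod n → X) → R, ∀ l : List X, l.length = n →
      matrixTrace (cycleMatrix t) (freeWord R l) = τ (freeWord R l) := by
  refine ⟨fun w => (n : ℚ)⁻¹ • τ (freeWord R (cyclicWord w 0)), fun l hl => ?_⟩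
  have hrot (w : ZMod n → X) (i : ZMod n) :
      τ (freeWord R (cyclicWord w 0)) = τ (freeWord R (cyclicWord w i)) := by
    rw [cyclicWord_eq_rotate w i, hτ.apply_freeWord_rotate]
  calc matrixTrace (cycleMatrix _) (freeWord R l)
      = ∑ p : (ZMod n → X) × ZMod n,
          if cyclicWord p.1 p.2 = l then (n : ℚ)⁻¹ • τ (freeWord R l) else 0 := by
        rw [matrixTrace_cycleMatrix_freeWord_of_length_eq _ hl]
        refine Finset.sum_congr rfl fun p _ => ?_
        split_ifs with hp
        · rw [hrot p.1 p.2, hp]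
        · rfl
    _ = ∑ _i : ZMod n, (n : ℚ)⁻¹ • τ (freeWord R l) := by
        simp [Fintype.sum_prod_type_right, cyclicWord_eq_iff hl, ← Equiv.eq_comp_symm]
    _ = τ (freeWord R l) := by
        simp [← Nat.cast_smul_eq_nsmul ℚ, smul_smul, NeZero.ne]

theorem exists_matrixTrace_freeWord_eq (R X : Type*) [CommRing R] [Module ℚ R] [Finite X]
    (d : ℕ) :
    ∃ n : ℕ, n ≠ 0 ∧ ∀ τ : FreeAlgebra R X →ₗ[R] R, IsTracial τ →
      ∃ A : X → Matrix (Fin n) (Fin n) R, ∀ l : List X, l ≠ [] → l.length ≤ d →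
        matrixTrace A (freeWord R l) = τ (freeWord R l) := by
  classical
  have := Fintype.ofFinite X
  induction d with
  | zero => exact ⟨1, one_ne_zero, fun τ _ => ⟨0, fun l hl hl' => by simp_all⟩⟩
  | succ d ih =>
    obtain ⟨n, hn, hreal⟩ := ih
    have : NeZero n := ⟨hn⟩
    let m := Fin n ⊕ (ZMod (d + 1) → X) × ZMod (d + 1)
    refine ⟨Fintype.card m, Fintype.card_ne_zero, fun τ hτ => ?_⟩
    obtain ⟨A, hA⟩ := hreal τ hτ
    obtain ⟨t, ht⟩ :=
      (hτ.sub (isTracial_matrixTrace A)).exists_matrixTrace_cycleMatrix_eq (d + 1)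
    let e := Fintype.equivFin m
    refine ⟨fun x => Matrix.reindex e e (Matrix.fromBlocks (A x) 0 0 (cycleMatrix t x)),
      fun l hl hld => ?_⟩
    rw [matrixTrace_reindex, matrixTrace_fromBlocks_zero, LinearMap.add_apply]
    rcases hld.lt_or_eq with hlt | heq
    · rw [hA l hl (Nat.lt_succ_iff.1 hlt), matrixTrace_cycleMatrix_freeWord_of_length_lt t hl hlt,
        add_zero]
    · rw [ht l heq, LinearMap.sub_apply, add_sub_cancel]

theorem exists_matrixTrace_eqOn_wordSpan (R X : Type*) [CommRing R] [Module ℚ R] [Finite X]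
    (d : ℕ) :
    ∃ n : ℕ, n ≠ 0 ∧ ∀ τ : FreeAlgebra R X →ₗ[R] R, IsTracial τ → τ 1 = n →
      ∃ A : X → Matrix (Fin n) (Fin n) R, Set.EqOn (matrixTrace A) τ (wordSpan R X d) := by
  obtain ⟨n, hn, hreal⟩ := exists_matrixTrace_freeWord_eq R X d
  refine ⟨n, hn, fun τ hτ hτ1 => ?_⟩
  obtain ⟨A, hA⟩ := hreal τ hτ
  refine ⟨A, LinearMap.eqOn_span ?_⟩
  rintro _ ⟨l, hl, rfl⟩
  rcases eq_or_ne l [] with rfl | hne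
  · simp [hτ1]
  · exact hA l hne hl

theorem IsTracial.exists_matrixTrace_eq_mul {F X : Type*} [Field F] [CharZero F] [Finite X]
    {τ : FreeAlgebra F X →ₗ[F] F} (hτ : IsTracial τ) (hτ1 : τ 1 ≠ 0)
    {s : Set (FreeAlgebra F X)} (hs : s.Finite) :
    ∃ (n : ℕ) (A : X → Matrix (Fin n) (Fin n) F), ∃ c ≠ 0,
      ∀ p ∈ s, matrixTrace A p = c * τ p := by
  obtain ⟨d, hd⟩ :=
    ((Filter.eventually_all_finite hs).2 fun p _ => eventually_mem_wordSpan F p).exists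
  obtain ⟨n, hn, hreal⟩ := exists_matrixTrace_eqOn_wordSpan F X d
  obtain ⟨A, hA⟩ := hreal ((n / τ 1) • τ) (hτ.smul _) (by simp [hτ1])
  exact ⟨n, A, n / τ 1, div_ne_zero (Nat.cast_ne_zero.2 hn) hτ1, fun p hp => hA (hd p hp)⟩

end Realization

section CycEq

variable {F : Type*} [Field F] {g : ℕ}

theorem cycEq_iff {p q : FreeAlgebra F (Fin g)} :
    CycEq p q ↔ p - q ∈ commutatorSpan F (FreeAlgebra F (Fin g)) := Iff.rfl

theorem cycEq_comm {p q : FreeAlgebra F (Fin g)} : CycEq p q ↔ CycEq q p := by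
  rw [cycEq_iff, cycEq_iff, ← neg_sub, neg_mem_iff]

theorem CycEq.matrixTrace_eq {m : Type*} [Fintype m] [DecidableEq m]
    {p q : FreeAlgebra F (Fin g)} (h : CycEq p q) (A : Fin g → Matrix m m F) :
    matrixTrace A p = matrixTrace A q := by
  have hker := isTracial_iff_commutatorSpan_le_ker.1 (isTracial_matrixTrace A) h
  rwa [LinearMap.mem_ker, map_sub, sub_eq_zero] at hker

theorem mem_span_range_sup_commutatorSpan {ι : Type*} [Fintype ι]
    {f : ι → FreeAlgebra F (Fin g)} {p : FreeAlgebra F (Fin g)} :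
    p ∈ Submodule.span F (Set.range f) ⊔ commutatorSpan F (FreeAlgebra F (Fin g)) ↔
      ∃ c : ι → F, CycEq p (∑ i, c i • f i) := by
  simp only [Submodule.mem_sup, Submodule.mem_span_range_iff_exists_fun, cycEq_iff,
    exists_exists_eq_and]
  refine exists_congr fun c => ⟨?_, fun h => ⟨_, h, add_sub_cancel _ _⟩⟩
  rintro ⟨u, hu, rfl⟩
  simpa using hu

end CycEq

theorem spurnullstellensatz_general {F : Type*} [Field F] [CharZero F]
    (g r : ℕ) (f : Fin r → FreeAlgebra F (Fin g)) (f₀ : FreeAlgebra F (Fin g)) :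
    (∀ (n : ℕ) (A : Fin g → Matrix (Fin n) (Fin n) F),
        (∀ i : Fin r, Matrix.trace (FreeAlgebra.lift F A (f i)) = 0) →
        Matrix.trace (FreeAlgebra.lift F A f₀) = 0)
    ↔ ((∃ lam : Fin r → F, CycEq f₀ (∑ i : Fin r, lam i • f i)) ∨
       (∃ lam : Fin r → F, CycEq (∑ i : Fin r, lam i • f i) 1)) := by
  simp only [← matrixTrace_apply]
  constructor
  · intro htrace
    by_contra hcon
    simp_rw [not_or, cycEq_comm (q := 1), ← mem_span_range_sup_commutatorSpan] at hcon
    obtain ⟨τ, hker, hτ⟩ :=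
      exists_dual_le_ker_forall_apply_ne_zero _ (v := ![f₀, 1]) (Fin.forall_fin_two.2 hcon)
    have hτtr : IsTracial τ :=
      isTracial_iff_commutatorSpan_le_ker.2 (le_sup_right.trans hker)
    have hτf (i : Fin r) : τ (f i) = 0 :=
      hker (Submodule.mem_sup_left (Submodule.subset_span ⟨i, rfl⟩))
    obtain ⟨n, A, c, hc, hA⟩ :=
      hτtr.exists_matrixTrace_eq_mul (hτ 1) ((Set.finite_range f).insert f₀)
    have hf₀ := htrace n A fun i => by rw [hA _ (.inr ⟨i, rfl⟩), hτf, mul_zero]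
    rw [hA _ (.inl rfl)] at hf₀
    exact mul_ne_zero hc (hτ 0) hf₀
  · rintro (⟨lam, hlam⟩ | ⟨lam, hlam⟩) n A hA
    · simpa [hA] using hlam.matrixTrace_eq A
    · obtain rfl : n = 0 := by simpa [hA, eq_comm] using hlam.matrixTrace_eq A
      exact Matrix.trace_fin_zero (FreeAlgebra.lift F A f₀)

/-- **Spurnullstellensatz.** Over an algebraically closed field `F` of characteristic
zero, `tr (f A) = 0` whenever `tr (f₁ A) = ⋯ = tr (f_r A) = 0` (for all matrix sizes)
iff `f` is cyclically equivalent to a linear combination of the `f i`, or some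
linear combination of the `f i` is cyclically equivalent to `1`. -/
theorem spurnullstellensatz {F : Type*} [Field F] [IsAlgClosed F] [CharZero F]
    (g r : ℕ) (f : Fin r → FreeAlgebra F (Fin g)) (f₀ : FreeAlgebra F (Fin g)) :
    (∀ (n : ℕ) (A : Fin g → Matrix (Fin n) (Fin n) F),
        (∀ i : Fin r, Matrix.trace (FreeAlgebra.lift F A (f i)) = 0) →
        Matrix.trace (FreeAlgebra.lift F A f₀) = 0)
    ↔ ((∃ lam : Fin r → F, CycEq f₀ (∑ i : Fin r, lam i • f i)) ∨
       (∃ lam : Fin r → F, CycEq (∑ i : Fin r, lam i • f i) 1)) :=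
  spurnullstellensatz_general g r f f₀
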